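/- arXiv:1706.03163 — 4 statements merged into one kernel-verified Lean document; each statement's English description precedes it below -/
import Mathlib

section
/- Let (X, d) be a metric space, let x₀ ∈ X, and let u : X → ℝ be a function with u(x₀) > 0 which is bounded above on the closed ball of radius 2 around x₀. Set A = (1/100)·√(u(x₀)). Then there exists a point y in the closed ball of radius 1 around x₀ such that, writing Q = u(y), one has Q ≥ u(x₀), the open ball of radius A·Q^{-1/2} around y is contained in the open ball of radius 2 around x₀, and u(x) ≤ 2Q for every x in the open ball of radius A·Q^{-1/2} around y. -/
/-! With radii `r = A * u ^ (-α)` and `θ = C ^ (-α) < 1`, a jump from `y` to a point `x` at distance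
less than `r y` with `C * u y < u x` shrinks the radius by the factor `θ`. Hence
`(1 - θ) * dist · x₀ + r` does not increase along such a jump, and the region where this quantity is
at most its value at `x₀` is closed under jumps. A point of the region whose value of `u` exceeds
`1 / C` times the supremum over the region therefore admits no further jump. -/

open Metric

section PickingRegion

variable {X : Type*} [PseudoMetricSpace X] {u r : X → ℝ} {θ R : ℝ} {x₀ x y : X}

/-- The points `y` at which `u` is at least `u x₀` and which are so close to `x₀` that the total
length of the remaining jumps, at most the geometric series `r y / (1 - θ)`, still fits into the
budget `r x₀ / (1 - θ)`. The inequality is multiplied by `1 - θ` to avoid the division. -/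
def pickingRegion (u r : X → ℝ) (θ : ℝ) (x₀ : X) : Set X :=
  {y | u x₀ ≤ u y ∧ (1 - θ) * dist y x₀ + r y ≤ r x₀}

lemma self_mem_pickingRegion : x₀ ∈ pickingRegion u r θ x₀ := by
  simp [pickingRegion]

lemma mem_pickingRegion_of_mem_ball (hθ : θ ≤ 1) (hy : y ∈ pickingRegion u r θ x₀)
    (hx : x ∈ ball y (r y)) (hu : u y ≤ u x) (hr : r x ≤ θ * r y) :
    x ∈ pickingRegion u r θ x₀ := by
  refine ⟨hy.1.trans hu, ?_⟩
  have hdist : dist x x₀ ≤ r y + dist y x₀ :=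
    (dist_triangle x y x₀).trans (by gcongr; exact (mem_ball.1 hx).le)
  calc (1 - θ) * dist x x₀ + r x
      ≤ (1 - θ) * (r y + dist y x₀) + θ * r y := by
        gcongr
    _ = (1 - θ) * dist y x₀ + r y := by ring
    _ ≤ r x₀ := hy.2

lemma mem_closedBall_of_mem_pickingRegion (hθ : θ < 1) (hR : r x₀ ≤ (1 - θ) * R)
    (hy : y ∈ pickingRegion u r θ x₀) (hr : 0 ≤ r y) : y ∈ closedBall x₀ R := by
  have hscaled : (1 - θ) * dist y x₀ ≤ (1 - θ) * R := by linarith [hy.2]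
  exact mem_closedBall.2 (le_of_mul_le_mul_left hscaled (sub_pos.2 hθ))

lemma ball_subset_ball_of_mem_pickingRegion (hθ₀ : 0 ≤ θ) (hθ₁ : θ < 1)
    (hR : r x₀ ≤ (1 - θ) * R) (hy : y ∈ pickingRegion u r θ x₀) (hr : 0 ≤ r y) :
    ball y (r y) ⊆ ball x₀ R := by
  refine ball_subset_ball' (le_of_mul_le_mul_left ?_ (sub_pos.2 hθ₁))
  calc (1 - θ) * (r y + dist y x₀)
      = (1 - θ) * dist y x₀ + r y - θ * r y := by ring
    _ ≤ r x₀ := (sub_le_self _ (mul_nonneg hθ₀ hr)).trans hy.2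
    _ ≤ (1 - θ) * R := hR

end PickingRegion

lemma exists_mem_forall_le_mul_of_bddAbove {s : Set ℝ} {a C : ℝ} (hs : BddAbove s) (has : a ∈ s)
    (ha : 0 < a) (hC : 1 < C) : ∃ b ∈ s, ∀ c ∈ s, c ≤ C * b := by
  have hsup : 0 < sSup s := ha.trans_le (le_csSup hs has)
  obtain ⟨b, hb, hlt⟩ := exists_lt_of_lt_csSup ⟨a, has⟩ (div_lt_self hsup hC)
  have hsup_lt : sSup s < C * b := (div_lt_iff₀' (one_pos.trans hC)).1 hlt
  exact ⟨b, hb, fun c hc => (le_csSup hs hc).trans hsup_lt.le⟩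

lemma rpow_neg_le_mul_rpow_neg {a b C α : ℝ} (hC : 0 < C) (hb : 0 < b) (hα : 0 ≤ α)
    (h : C * b ≤ a) : a ^ (-α) ≤ C ^ (-α) * b ^ (-α) := by
  rw [← Real.mul_rpow hC.le hb.le]
  exact Real.rpow_le_rpow_of_nonpos (mul_pos hC hb) h (neg_nonpos.2 hα)

theorem point_picking_general {X : Type*} [PseudoMetricSpace X] {x₀ : X} {u : X → ℝ}
    {A C R α : ℝ} (hA : 0 ≤ A) (hC : 1 < C) (hα : 0 < α) (hpos : 0 < u x₀)
    (hR : A * u x₀ ^ (-α) ≤ (1 - C ^ (-α)) * R) (hbdd : BddAbove (u '' closedBall x₀ R)) :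
    ∃ y ∈ closedBall x₀ R, u x₀ ≤ u y ∧ ball y (A * u y ^ (-α)) ⊆ ball x₀ R ∧
      ∀ x ∈ ball y (A * u y ^ (-α)), u x ≤ C * u y := by
  have hC₀ : 0 < C := one_pos.trans hC
  have hθ₀ : 0 ≤ C ^ (-α) := Real.rpow_nonneg hC₀.le _
  have hθ₁ : C ^ (-α) < 1 := Real.rpow_lt_one_of_one_lt_of_neg hC (neg_lt_zero.2 hα)
  let r : X → ℝ := fun y => A * u y ^ (-α)
  let S : Set X := pickingRegion u r (C ^ (-α)) x₀
  have hu_pos : ∀ {y}, y ∈ S → 0 < u y := fun hy => hpos.trans_le hy.1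
  have hr : ∀ {y}, y ∈ S → 0 ≤ r y := fun hy => mul_nonneg hA (Real.rpow_nonneg (hu_pos hy).le _)
  have hS : S ⊆ closedBall x₀ R := fun y hy =>
    mem_closedBall_of_mem_pickingRegion hθ₁ hR hy (hr hy)
  obtain ⟨_, ⟨y, hy, rfl⟩, hmax⟩ := exists_mem_forall_le_mul_of_bddAbove
    (hbdd.mono (Set.image_mono hS)) (Set.mem_image_of_mem u self_mem_pickingRegion) hpos hC
  have hball : ball y (r y) ⊆ ball x₀ R :=
    ball_subset_ball_of_mem_pickingRegion hθ₀ hθ₁ hR hy (hr hy)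
  refine ⟨y, hS hy, hy.1, hball, fun x hx => ?_⟩
  by_contra! hjump
  have hu : u y ≤ u x := (le_mul_of_one_le_left (hu_pos hy).le hC.le).trans hjump.le
  have hshrink : r x ≤ C ^ (-α) * r y := calc
    A * u x ^ (-α) ≤ A * (C ^ (-α) * u y ^ (-α)) := by
      gcongr
      exact rpow_neg_le_mul_rpow_neg hC₀ (hu_pos hy) hα.le hjump.le
    _ = C ^ (-α) * (A * u y ^ (-α)) := mul_left_comm _ _ _
  have hxS : x ∈ S := mem_pickingRegion_of_mem_ball hθ₁.le hy hx hu hshrink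
  exact hjump.not_ge (hmax _ (Set.mem_image_of_mem u hxS))

lemma sqrt_mul_rpow_neg_half {a : ℝ} (ha : 0 < a) : √a * a ^ (-(1 / 2) : ℝ) = 1 := by
  rw [Real.sqrt_eq_rpow, ← Real.rpow_add ha, add_neg_cancel, Real.rpow_zero]

lemma two_rpow_neg_half_le_three_quarters : (2 : ℝ) ^ (-(1 / 2) : ℝ) ≤ 3 / 4 := by
  have hsqrt : 4 / 3 ≤ √(2 : ℝ) := Real.le_sqrt_of_sq_le (by norm_num)
  rw [Real.rpow_neg two_pos.le, ← Real.sqrt_eq_rpow]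
  exact inv_le_of_inv_le₀ (by norm_num) (by linarith)

/-- Perelman's point-picking technique, stated purely metrically. -/
theorem point_picking {X : Type*} [MetricSpace X] (x₀ : X) (u : X → ℝ)
    (hpos : 0 < u x₀) (hbdd : BddAbove (u '' Metric.closedBall x₀ 2)) :
    ∃ y ∈ Metric.closedBall x₀ 1,
      u x₀ ≤ u y ∧
      Metric.ball y ((1 / 100) * Real.sqrt (u x₀) * (u y) ^ (-(1 / 2) : ℝ)) ⊆
        Metric.ball x₀ 2 ∧
      ∀ x ∈ Metric.ball y ((1 / 100) * Real.sqrt (u x₀) * (u y) ^ (-(1 / 2) : ℝ)),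
        u x ≤ 2 * u y := by
  have hradius : (1 / 100) * √(u x₀) * u x₀ ^ (-(1 / 2) : ℝ) ≤ (1 - 2 ^ (-(1 / 2) : ℝ)) * 1 := by
    rw [mul_assoc, sqrt_mul_rpow_neg_half hpos]
    linarith [two_rpow_neg_half_le_three_quarters]
  obtain ⟨y, hy, hu, hball, hle⟩ := point_picking_general (by positivity) one_lt_two one_half_pos
    hpos hradius
    (hbdd.mono (Set.image_mono (closedBall_subset_closedBall one_le_two)))
  exact ⟨y, hy, hu, hball.trans (ball_subset_ball one_le_two), hle⟩
end

section
/- Let k ≥ 1 and n ≥ 2 be integers with n even. Let Γ be the group with presentation ⟨x, y | x·y·x⁻¹ = y⁻¹, x^(2^k) = y^n⟩, i.e., the quotient of the free group on two generators x, y by the normal closure of the relators x·y·x⁻¹·y and x^(2^k)·y^(−n). Then the abelianization of Γ is isomorphic to ℤ/2 × ℤ/2^k. -/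
/-!
In a commutative group the relator `x y x⁻¹ y` reads `y ^ 2`, and once `y ^ 2 = 1` and `n` is even,
the relator `x ^ m y ^ (-n)` reads `x ^ m`. Hence homomorphisms from the abelianization of
`⟨x, y | x y x⁻¹ y, x ^ m y ^ (-n)⟩` to a commutative group `A` are the pairs `(x, y)` in `A` with
`x ^ m = 1` and `y ^ 2 = 1`, and so are homomorphisms from `ℤ/2 × ℤ/m` to `A`.
-/

open Multiplicative (ofAdd)

section MultiplicativeZMod

variable {G : Type*} [Group G] {m : ℕ}

/-- The homomorphism `i ↦ g ^ i` from the multiplicatively written cyclic group `ℤ/m`, for `g` with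
`g ^ m = 1`; the counterpart for `ℤ/m` of `zpowersHom`. -/
def zmodPowersHom (g : G) (hg : g ^ m = 1) : Multiplicative (ZMod m) →* G :=
  AddMonoidHom.toMultiplicativeLeft <|
    ZMod.lift m ⟨zmultiplesHom (Additive G) (Additive.ofMul g), by
      rw [zmultiplesHom_apply, natCast_zsmul, ← ofMul_pow, hg, ofMul_one]⟩

theorem zmodPowersHom_ofAdd_intCast (g : G) (hg : g ^ m = 1) (i : ℤ) :
    zmodPowersHom g hg (ofAdd (i : ZMod m)) = g ^ i :=
  congrArg Additive.toMul (ZMod.lift_coe m _ i)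

theorem zmodPowersHom_ofAdd_one (g : G) (hg : g ^ m = 1) :
    zmodPowersHom g hg (ofAdd 1) = g := by
  simpa using zmodPowersHom_ofAdd_intCast g hg 1

theorem ofAdd_one_zmod_pow_self (m : ℕ) : ofAdd (1 : ZMod m) ^ m = 1 := by
  rw [← ofAdd_nsmul, nsmul_one, ZMod.natCast_self, ofAdd_zero]

theorem multiplicative_zmod_hom_ext {φ ψ : Multiplicative (ZMod m) →* G}
    (h : φ (ofAdd 1) = ψ (ofAdd 1)) : φ = ψ := by
  have hcast : Function.Surjective (Int.castAddHom (ZMod m)).toMultiplicative :=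
    ZMod.intCast_surjective
  refine (MonoidHom.cancel_right hcast).1 (MonoidHom.ext_mint ?_)
  simpa using h

theorem prod_multiplicative_zmod_hom_ext {l : ℕ}
    {φ ψ : Multiplicative (ZMod l) × Multiplicative (ZMod m) →* G}
    (hl : φ (ofAdd 1, 1) = ψ (ofAdd 1, 1)) (hm : φ (1, ofAdd 1) = ψ (1, ofAdd 1)) : φ = ψ := by
  have hinl : φ.comp (.inl _ _) = ψ.comp (.inl _ _) := multiplicative_zmod_hom_ext hl
  have hinr : φ.comp (.inr _ _) = ψ.comp (.inr _ _) := multiplicative_zmod_hom_ext hm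
  ext ⟨a, b⟩
  rw [← Prod.fst_mul_snd (a, b), map_mul, map_mul]
  exact congrArg₂ (· * ·) (DFunLike.congr_fun hinl a) (DFunLike.congr_fun hinr b)

end MultiplicativeZMod

section PresentedGroup

variable {α : Type*} {rels : Set (FreeGroup α)}

theorem presentedGroup_lift_comp_of_eq_one_of_mem {G : Type*} [Group G]
    (φ : PresentedGroup rels →* G) {r : FreeGroup α} (hr : r ∈ rels) :
    FreeGroup.lift (fun a ↦ φ (.of a)) r = 1 := by
  have hlift : FreeGroup.lift (fun a ↦ φ (.of a)) = φ.comp (PresentedGroup.mk rels) :=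
    FreeGroup.ext_hom _ _ fun a ↦ FreeGroup.lift_apply_of
  rw [hlift, MonoidHom.comp_apply, PresentedGroup.one_of_mem hr, map_one]

theorem abelianization_presentedGroup_hom_ext {A : Type*} [CommGroup A]
    {φ ψ : Abelianization (PresentedGroup rels) →* A}
    (h : ∀ a, φ (.of (.of a)) = ψ (.of (.of a))) : φ = ψ :=
  Abelianization.hom_ext _ _ (PresentedGroup.ext h)

end PresentedGroup

/-- The relators of `⟨x, y | x y x⁻¹ = y⁻¹, x ^ m = y ^ n⟩`, with `x` and `y` the generators `0` and
`1`; fundamental groups of prism manifolds have presentations of this form. -/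
def prismRelators (m : ℕ) (n : ℤ) : Set (FreeGroup (Fin 2)) :=
  {FreeGroup.of 0 * FreeGroup.of 1 * (FreeGroup.of 0)⁻¹ * FreeGroup.of 1,
    FreeGroup.of 0 ^ m * FreeGroup.of 1 ^ (-n)}

theorem forall_mem_prismRelators_lift_eq_one_iff {A : Type*} [CommGroup A] {m : ℕ} {n : ℤ}
    (hn : Even n) (f : Fin 2 → A) :
    (∀ r ∈ prismRelators m n, FreeGroup.lift f r = 1) ↔ f 0 ^ m = 1 ∧ f 1 ^ 2 = 1 := by
  have hconj : f 0 * f 1 * (f 0)⁻¹ * f 1 = f 1 ^ 2 := by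
    rw [mul_inv_cancel_comm, pow_two]
  have hpow (h : f 1 ^ 2 = 1) : f 1 ^ (-n) = 1 := by
    obtain ⟨j, hj⟩ := hn.neg
    rw [hj, ← two_mul, zpow_mul, zpow_ofNat, h, one_zpow]
  simp only [prismRelators, Set.forall_mem_insert, Set.mem_singleton_iff, forall_eq, map_mul,
    map_inv, map_pow, map_zpow, FreeGroup.lift_apply_of, hconj]
  rw [and_comm, and_congr_left_iff]
  intro h
  rw [hpow h, mul_one]

theorem prismAbelianization_generators_pow_eq_one {n : ℤ} (m : ℕ) (hn : Even n) :
    (Abelianization.of (PresentedGroup.of (rels := prismRelators m n) 0)) ^ m = 1 ∧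
      (Abelianization.of (PresentedGroup.of (rels := prismRelators m n) 1)) ^ 2 = 1 :=
  (forall_mem_prismRelators_lift_eq_one_iff hn _).1 fun _ ↦
    presentedGroup_lift_comp_of_eq_one_of_mem Abelianization.of

section PrismAbelianization

variable {n : ℤ} (m : ℕ) (hn : Even n)

/-- The map from the abelianized prism group to `ℤ/2 × ℤ/m` that sends `x` to the generator of
`ℤ/m` and `y` to that of `ℤ/2`. -/
def prismAbelianizationToProd :
    Abelianization (PresentedGroup (prismRelators m n)) →*
      Multiplicative (ZMod 2) × Multiplicative (ZMod m) :=
  Abelianization.lift <| PresentedGroup.toGroup (f := ![(1, ofAdd 1), (ofAdd 1, 1)]) <|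
    (forall_mem_prismRelators_lift_eq_one_iff hn _).2
      ⟨Prod.ext (one_pow m) (ofAdd_one_zmod_pow_self m),
        Prod.ext (ofAdd_one_zmod_pow_self 2) (one_pow 2)⟩

theorem prismAbelianizationToProd_of_of_zero :
    prismAbelianizationToProd m hn (.of (.of 0)) = (1, ofAdd 1) := by
  rw [prismAbelianizationToProd, Abelianization.lift_apply_of, PresentedGroup.toGroup.of,
    Matrix.cons_val_zero]

theorem prismAbelianizationToProd_of_of_one :
    prismAbelianizationToProd m hn (.of (.of 1)) = (ofAdd 1, 1) := by
  rw [prismAbelianizationToProd, Abelianization.lift_apply_of, PresentedGroup.toGroup.of,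
    Matrix.cons_val_one, Matrix.cons_val_fin_one]

/-- The map from `ℤ/2 × ℤ/m` to the abelianized prism group that sends the generator of `ℤ/m` to
`x` and that of `ℤ/2` to `y`. -/
def prodToPrismAbelianization :
    Multiplicative (ZMod 2) × Multiplicative (ZMod m) →*
      Abelianization (PresentedGroup (prismRelators m n)) :=
  (zmodPowersHom _ (prismAbelianization_generators_pow_eq_one m hn).2).coprod
    (zmodPowersHom _ (prismAbelianization_generators_pow_eq_one m hn).1)

theorem prodToPrismAbelianization_one_ofAdd_one :
    prodToPrismAbelianization m hn (1, ofAdd 1) = .of (.of 0) := by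
  rw [prodToPrismAbelianization, MonoidHom.coprod_apply, MonoidHom.map_one, one_mul,
    zmodPowersHom_ofAdd_one]

theorem prodToPrismAbelianization_ofAdd_one_one :
    prodToPrismAbelianization m hn (ofAdd 1, 1) = .of (.of 1) := by
  rw [prodToPrismAbelianization, MonoidHom.coprod_apply, MonoidHom.map_one, mul_one,
    zmodPowersHom_ofAdd_one]

theorem prodToPrismAbelianization_comp_prismAbelianizationToProd :
    (prodToPrismAbelianization m hn).comp (prismAbelianizationToProd m hn) = .id _ := by
  refine abelianization_presentedGroup_hom_ext (Fin.forall_fin_two.2 ⟨?_, ?_⟩)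
  · rw [MonoidHom.comp_apply, prismAbelianizationToProd_of_of_zero,
      prodToPrismAbelianization_one_ofAdd_one, MonoidHom.id_apply]
  · rw [MonoidHom.comp_apply, prismAbelianizationToProd_of_of_one,
      prodToPrismAbelianization_ofAdd_one_one, MonoidHom.id_apply]

theorem prismAbelianizationToProd_comp_prodToPrismAbelianization :
    (prismAbelianizationToProd m hn).comp (prodToPrismAbelianization m hn) = .id _ := by
  refine prod_multiplicative_zmod_hom_ext ?_ ?_
  · rw [MonoidHom.comp_apply, prodToPrismAbelianization_ofAdd_one_one,
      prismAbelianizationToProd_of_of_one, MonoidHom.id_apply]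
  · rw [MonoidHom.comp_apply, prodToPrismAbelianization_one_ofAdd_one,
      prismAbelianizationToProd_of_of_zero, MonoidHom.id_apply]

end PrismAbelianization

theorem prism_abelianization_even_general (m : ℕ) {n : ℤ} (hn : Even n) :
    Nonempty
      (Abelianization (PresentedGroup (prismRelators m n)) ≃*
        Multiplicative (ZMod 2) × Multiplicative (ZMod m)) :=
  ⟨MonoidHom.toMulEquiv (prismAbelianizationToProd m hn) (prodToPrismAbelianization m hn)
    (prodToPrismAbelianization_comp_prismAbelianizationToProd m hn)
    (prismAbelianizationToProd_comp_prodToPrismAbelianization m hn)⟩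

/-- For `k ≥ 1` and even `n ≥ 2`, the abelianization of the group
`⟨x, y | x y x⁻¹ = y⁻¹, x^(2^k) = y^n⟩` is isomorphic to `ℤ/2 × ℤ/2^k`. -/
theorem prism_abelianization_even (k n : ℕ) (hk : 1 ≤ k) (hn : 2 ≤ n) (hne : Even n) :
    Nonempty
      (Abelianization (PresentedGroup
        ({FreeGroup.of 0 * FreeGroup.of 1 * (FreeGroup.of 0)⁻¹ * FreeGroup.of 1,
          (FreeGroup.of 0) ^ (2 ^ k) * (FreeGroup.of 1) ^ (-(n : ℤ))} :
          Set (FreeGroup (Fin 2)))) ≃*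
        Multiplicative (ZMod 2) × Multiplicative (ZMod (2 ^ k))) :=
  prism_abelianization_even_general (2 ^ k) hne.natCast
end

section
/- Let k ≥ 1 be an integer. Let Γ be the group with presentation ⟨x, y, z | (x·y)² = x², x² = y², z·x·z⁻¹ = y, z·y·z⁻¹ = x·y, z^(3^k) = 1⟩, i.e., the quotient of the free group on three generators x, y, z by the normal closure of the relators (x·y)²·x⁻², x²·y⁻², z·x·z⁻¹·y⁻¹, z·y·z⁻¹·(x·y)⁻¹, and z^(3^k). Then the abelianization of Γ is isomorphic to ℤ/3^k. -/
/-!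
Conjugation is trivial in a commutative group, so there `zyz⁻¹ = xy` forces `x = 1`, then
`zxz⁻¹ = y` forces `y = 1`, and the relations that remain say `z ^ n = 1` with `n = 3 ^ k`. Hence
the abelianization is cyclic, generated by the class of `z`, and the homomorphism to `ℤ/n` sending
`x, y, z` to `0, 0, 1` shows that this class has order exactly `n`.
-/

theorem lift_comp_of_eq_one {α G : Type*} [Group G] {rels : Set (FreeGroup α)}
    (φ : PresentedGroup rels →* G) {r : FreeGroup α} (hr : r ∈ rels) :
    FreeGroup.lift (φ ∘ PresentedGroup.of) r = 1 := by
  have lift_eq : FreeGroup.lift (φ ∘ PresentedGroup.of) = φ.comp (PresentedGroup.mk rels) := by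
    ext i
    simp [PresentedGroup.of]
  rw [lift_eq, MonoidHom.comp_apply, PresentedGroup.one_of_mem hr, map_one]

theorem abelianization_presentedGroup_generated_by {α : Type*} {rels : Set (FreeGroup α)}
    {H : Subgroup (Abelianization (PresentedGroup rels))}
    (h : ∀ i, Abelianization.of (PresentedGroup.of i) ∈ H)
    (a : Abelianization (PresentedGroup rels)) : a ∈ H := by
  obtain ⟨g, rfl⟩ := QuotientGroup.mk_surjective a
  exact PresentedGroup.generated_by rels (H.comap Abelianization.of) h g

theorem orderOf_map_eq_of_pow_eq_one {G H : Type*} [Monoid G] [Monoid H] (f : G →* H) {g : G}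
    (h : g ^ orderOf (f g) = 1) : orderOf (f g) = orderOf g :=
  Nat.dvd_antisymm (orderOf_map_dvd f g) (orderOf_dvd_of_pow_eq_one h)

theorem orderOf_ofAdd_one_zmod (n : ℕ) :
    orderOf (Multiplicative.ofAdd (1 : ZMod n)) = n := by
  rw [orderOf_ofAdd_eq_addOrderOf, ZMod.addOrderOf_one]

theorem mem_zpowers_ofAdd_one_zmod {n : ℕ} (a : Multiplicative (ZMod n)) :
    a ∈ Subgroup.zpowers (Multiplicative.ofAdd (1 : ZMod n)) := by
  obtain ⟨m, hm⟩ := ZMod.intCast_surjective a.toAdd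
  exact ⟨m, by simp [← ofAdd_zsmul, hm]⟩

/-- The relators of `⟨x, y, z | (xy)² = x² = y², zxz⁻¹ = y, zyz⁻¹ = xy, zⁿ = 1⟩`, where the
generators `0, 1, 2` stand for `x, y, z`. For `n = 3 ^ k` with `k ≥ 1` this presents the
fundamental group of a tetrahedral manifold; for `n = 0` the last relator is trivial. -/
def tetrahedralRelators (n : ℕ) : Set (FreeGroup (Fin 3)) :=
  {(FreeGroup.of 0 * FreeGroup.of 1) ^ 2 * ((FreeGroup.of 0) ^ 2)⁻¹,
    (FreeGroup.of 0) ^ 2 * ((FreeGroup.of 1) ^ 2)⁻¹,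
    FreeGroup.of 2 * FreeGroup.of 0 * (FreeGroup.of 2)⁻¹ * (FreeGroup.of 1)⁻¹,
    FreeGroup.of 2 * FreeGroup.of 1 * (FreeGroup.of 2)⁻¹ * (FreeGroup.of 0 * FreeGroup.of 1)⁻¹,
    (FreeGroup.of 2) ^ n}

theorem lift_tetrahedralRelators_eq_one_iff {A : Type*} [CommGroup A] {n : ℕ} {f : Fin 3 → A} :
    (∀ r ∈ tetrahedralRelators n, FreeGroup.lift f r = 1) ↔ f 0 = 1 ∧ f 1 = 1 ∧ f 2 ^ n = 1 := by
  simp only [tetrahedralRelators, Set.forall_mem_insert, Set.mem_singleton_iff, forall_eq,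
    map_mul, map_inv, map_pow, FreeGroup.lift_apply_of, mul_inv_eq_one, mul_inv_cancel_comm]
  constructor
  · rintro ⟨-, -, x_eq_y, y_eq_xy, z_pow⟩
    have x_eq_one : f 0 = 1 := right_eq_mul.mp y_eq_xy
    exact ⟨x_eq_one, x_eq_y ▸ x_eq_one, z_pow⟩
  · rintro ⟨x_eq_one, y_eq_one, z_pow⟩
    simp [x_eq_one, y_eq_one, z_pow]

theorem tetrahedral_abelianization_general (n : ℕ) :
    Nonempty (Abelianization (PresentedGroup (tetrahedralRelators n)) ≃*
      Multiplicative (ZMod n)) := by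
  let gen (i : Fin 3) : Abelianization (PresentedGroup (tetrahedralRelators n)) :=
    Abelianization.of (PresentedGroup.of i)
  obtain ⟨x_eq_one, y_eq_one, z_pow⟩ : gen 0 = 1 ∧ gen 1 = 1 ∧ gen 2 ^ n = 1 :=
    lift_tetrahedralRelators_eq_one_iff.mp fun _ ↦ lift_comp_of_eq_one Abelianization.of
  have mem_zpowers : ∀ a, a ∈ Subgroup.zpowers (gen 2) :=
    abelianization_presentedGroup_generated_by <| by
      change ∀ i, gen i ∈ _
      simp [Fin.forall_fin_succ, x_eq_one, y_eq_one]
  let target : Fin 3 → Multiplicative (ZMod n) := ![1, 1, Multiplicative.ofAdd 1]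
  have target_rels : ∀ r ∈ tetrahedralRelators n, FreeGroup.lift target r = 1 :=
    lift_tetrahedralRelators_eq_one_iff.mpr
      ⟨rfl, rfl, orderOf_dvd_iff_pow_eq_one.mp (orderOf_ofAdd_one_zmod n).dvd⟩
  let φ := Abelianization.lift (PresentedGroup.toGroup target_rels)
  have map_z : φ (gen 2) = Multiplicative.ofAdd 1 := PresentedGroup.toGroup.of target_rels
  refine ⟨mulEquivOfOrderOfEq mem_zpowers mem_zpowers_ofAdd_one_zmod ?_⟩
  rw [← map_z]
  refine (orderOf_map_eq_of_pow_eq_one φ ?_).symm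
  rw [map_z, orderOf_ofAdd_one_zmod, z_pow]

/-- For `k ≥ 1`, the abelianization of the group
`⟨x, y, z | (xy)² = x², x² = y², zxz⁻¹ = y, zyz⁻¹ = xy, z^(3^k) = 1⟩`
is isomorphic to `ℤ/3^k`. -/
theorem tetrahedral_abelianization (k : ℕ) (hk : 1 ≤ k) :
    Nonempty
      (Abelianization (PresentedGroup
        ({(FreeGroup.of 0 * FreeGroup.of 1) ^ 2 * ((FreeGroup.of 0) ^ 2)⁻¹,
          (FreeGroup.of 0) ^ 2 * ((FreeGroup.of 1) ^ 2)⁻¹,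
          FreeGroup.of 2 * FreeGroup.of 0 * (FreeGroup.of 2)⁻¹ * (FreeGroup.of 1)⁻¹,
          FreeGroup.of 2 * FreeGroup.of 1 * (FreeGroup.of 2)⁻¹ *
            (FreeGroup.of 0 * FreeGroup.of 1)⁻¹,
          (FreeGroup.of 2) ^ (3 ^ k)} :
          Set (FreeGroup (Fin 3)))) ≃*
        Multiplicative (ZMod (3 ^ k))) :=
  tetrahedral_abelianization_general (3 ^ k)
end

section
/- Let Γ be the group with presentation ⟨x, y | (x·y)² = x³, x³ = y⁴⟩, i.e., the quotient of the free group on two generators x, y by the normal closure of the relators (x·y)²·x⁻³ and x³·y⁻⁴. Then the abelianization of Γ is isomorphic to ℤ/2. -/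
/-! In a commutative group `(xy)² = x³` says `x = y²`, after which `x³ = yⁿ` says `y⁶ = yⁿ`.
So the abelianization of `⟨x, y | (xy)² = x³ = yⁿ⟩` is cyclic, generated by the class of `y`, and
that class has order exactly `|6 - n|` because `x ↦ 2`, `y ↦ 1` respects the relations in
`ℤ/|6 - n|`. For `n = 6` the order `0` means infinite order, in accordance with `ZMod 0 = ℤ`.
The binary octahedral group is the case `n = 4`. -/

section Presentation

variable {α : Type*}

/-- The class of the generator `a` in the abelianization of the group presented by `rels`. -/
def abelianizedOf (rels : Set (FreeGroup α)) (a : α) : Abelianization (PresentedGroup rels) :=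
  Abelianization.of (PresentedGroup.of a)

theorem closure_range_abelianizedOf (rels : Set (FreeGroup α)) :
    Subgroup.closure (Set.range (abelianizedOf rels)) = ⊤ := by
  have of_surjective : Function.Surjective (Abelianization.of (G := PresentedGroup rels)) :=
    QuotientGroup.mk_surjective
  change Subgroup.closure (Set.range (Abelianization.of ∘ PresentedGroup.of)) = ⊤
  rw [Set.range_comp, ← MonoidHom.map_closure, PresentedGroup.closure_range_of,
    Subgroup.map_top_of_surjective _ of_surjective]

theorem lift_abelianizedOf (rels : Set (FreeGroup α)) :
    FreeGroup.lift (abelianizedOf rels) = Abelianization.of.comp (PresentedGroup.mk rels) := by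
  ext a
  simp [abelianizedOf, PresentedGroup.of]

theorem lift_abelianizedOf_eq_one_of_mem {rels : Set (FreeGroup α)} {r : FreeGroup α}
    (hr : r ∈ rels) : FreeGroup.lift (abelianizedOf rels) r = 1 := by
  rw [lift_abelianizedOf, MonoidHom.comp_apply, PresentedGroup.one_of_mem hr, map_one]

end Presentation

theorem orderOf_eq_of_map_eq_ofAdd_one {M : Type*} [Monoid M] {m : ℕ} {g : M}
    (φ : M →* Multiplicative (ZMod m)) (hφ : φ g = Multiplicative.ofAdd 1) (hg : g ^ m = 1) :
    orderOf g = m := by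
  refine Nat.dvd_antisymm (orderOf_dvd_of_pow_eq_one hg) ?_
  simpa [hφ, orderOf_ofAdd_eq_addOrderOf, ZMod.addOrderOf_one] using orderOf_map_dvd φ g

/-- The relators of the binary triangle group `⟨2, 3, n⟩`, that is
`⟨x, y | (xy)² = x³ = yⁿ⟩`, with `x` and `y` the generators `0` and `1`. -/
def binaryTriangleRels (n : ℕ) : Set (FreeGroup (Fin 2)) :=
  {(FreeGroup.of 0 * FreeGroup.of 1) ^ 2 * ((FreeGroup.of 0) ^ 3)⁻¹,
    (FreeGroup.of 0) ^ 3 * ((FreeGroup.of 1) ^ n)⁻¹}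

theorem mul_sq_eq_cube_iff {M : Type*} [CancelCommMonoid M] {x y : M} :
    (x * y) ^ 2 = x ^ 3 ↔ x = y ^ 2 := by
  rw [mul_pow, pow_succ x 2, mul_right_inj, eq_comm]

theorem forall_binaryTriangleRels_lift_eq_one_iff {A : Type*} [CommGroup A] {n : ℕ}
    {f : Fin 2 → A} :
    (∀ r ∈ binaryTriangleRels n, FreeGroup.lift f r = 1) ↔
      f 0 = f 1 ^ 2 ∧ f 1 ^ (6 - n : ℤ).natAbs = 1 := by
  have cube_eq_iff (hx : f 0 = f 1 ^ 2) :
      f 0 ^ 3 = f 1 ^ n ↔ f 1 ^ (6 - n : ℤ).natAbs = 1 := by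
    rw [hx, ← pow_mul, pow_natAbs_eq_one, zpow_sub, mul_inv_eq_one, zpow_natCast]
    norm_cast
  simp only [binaryTriangleRels, Set.forall_mem_insert, Set.mem_singleton_iff, forall_eq, map_mul,
    map_pow, map_inv, FreeGroup.lift_apply_of, mul_inv_eq_one, mul_sq_eq_cube_iff]
  exact and_congr_right cube_eq_iff

section BinaryTriangle

variable (n : ℕ)

theorem abelianizedOf_binaryTriangleRels_zero :
    abelianizedOf (binaryTriangleRels n) 0 = abelianizedOf (binaryTriangleRels n) 1 ^ 2 :=
  (forall_binaryTriangleRels_lift_eq_one_iff.mp fun _ ↦ lift_abelianizedOf_eq_one_of_mem).1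

theorem abelianizedOf_binaryTriangleRels_one_pow :
    abelianizedOf (binaryTriangleRels n) 1 ^ (6 - n : ℤ).natAbs = 1 :=
  (forall_binaryTriangleRels_lift_eq_one_iff.mp fun _ ↦ lift_abelianizedOf_eq_one_of_mem).2

theorem zpowers_abelianizedOf_binaryTriangleRels_one :
    Subgroup.zpowers (abelianizedOf (binaryTriangleRels n) 1) = ⊤ := by
  rw [eq_top_iff, ← closure_range_abelianizedOf, Subgroup.closure_le, Set.range_subset_iff,
    Fin.forall_fin_two, abelianizedOf_binaryTriangleRels_zero]
  exact ⟨Subgroup.npow_mem_zpowers _ 2, Subgroup.mem_zpowers _⟩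

theorem orderOf_abelianizedOf_binaryTriangleRels_one :
    orderOf (abelianizedOf (binaryTriangleRels n) 1) = (6 - n : ℤ).natAbs := by
  let t : Multiplicative (ZMod (6 - n : ℤ).natAbs) := Multiplicative.ofAdd 1
  have t_pow : t ^ (6 - n : ℤ).natAbs = 1 := by
    rw [← ofAdd_nsmul, ZModModule.char_nsmul_eq_zero, ofAdd_zero]
  have rels_hold : ∀ r ∈ binaryTriangleRels n, FreeGroup.lift ![t ^ 2, t] r = 1 :=
    forall_binaryTriangleRels_lift_eq_one_iff.mpr ⟨rfl, t_pow⟩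
  let φ := Abelianization.lift (PresentedGroup.toGroup rels_hold)
  have φ_one : φ (abelianizedOf _ 1) = t := by simp [φ, abelianizedOf]
  exact orderOf_eq_of_map_eq_ofAdd_one φ φ_one (abelianizedOf_binaryTriangleRels_one_pow n)

theorem octahedral_abelianization_general :
    Nonempty (Abelianization (PresentedGroup (binaryTriangleRels n)) ≃*
      Multiplicative (ZMod (6 - n : ℤ).natAbs)) := by
  have zpowers_eq_top := zpowers_abelianizedOf_binaryTriangleRels_one n
  have card_eq : Nat.card (Abelianization (PresentedGroup (binaryTriangleRels n))) =
      (6 - n : ℤ).natAbs := by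
    rw [← orderOf_eq_card_of_zpowers_eq_top zpowers_eq_top,
      orderOf_abelianizedOf_binaryTriangleRels_one]
  exact ⟨(zmodMulEquivOfGenerator ((Subgroup.eq_top_iff' _).mp zpowers_eq_top) card_eq).symm⟩

end BinaryTriangle

/-- The abelianization of the binary octahedral group `⟨x, y | (xy)² = x³, x³ = y⁴⟩`
is isomorphic to `ℤ/2`. -/
theorem octahedral_abelianization :
    Nonempty
      (Abelianization (PresentedGroup
        ({(FreeGroup.of 0 * FreeGroup.of 1) ^ 2 * ((FreeGroup.of 0) ^ 3)⁻¹,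
          (FreeGroup.of 0) ^ 3 * ((FreeGroup.of 1) ^ 4)⁻¹} :
          Set (FreeGroup (Fin 2)))) ≃*
        Multiplicative (ZMod 2)) :=
  octahedral_abelianization_general 4
end
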